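/- Let V be a finite-dimensional complex vector space with a nondegenerate Hermitian form ω of signature (p, n−p) where n = dim V, and let k ≤ n. Two k-dimensional subspaces U₁, U₂ of V lie in the same orbit of the unitary group U(V, ω) acting on the Grassmannian of k-planes if and only if the restricted forms ω|_{U₁} and ω|_{U₂} have the same signature (a, b, c), where a and b are the numbers of positive and negative squares and c is the dimension of the radical. -/

import Mathlib

open Module Submodule

noncomputable section

variable {V : Type} [AddCommGroup V] [Module ℂ V]

/-- A sesquilinear form is Hermitian. -/
def IsHermitianForm (ω : V →ₗ⋆[ℂ] V →ₗ[ℂ] ℂ) : Prop :=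
  ∀ x y, ω x y = star (ω y x)

/-- Nondegeneracy of a sesquilinear form. -/
def IsNondeg (ω : V →ₗ⋆[ℂ] V →ₗ[ℂ] ℂ) : Prop :=
  ∀ x, (∀ y, ω x y = 0) → x = 0

/-- The orthogonal complement (in all of `V`) of a subspace with respect to `ω`. -/
def perp (ω : V →ₗ⋆[ℂ] V →ₗ[ℂ] ℂ) (U : Submodule ℂ V) : Submodule ℂ V where
  carrier := {v | ∀ u ∈ U, ω v u = 0}
  add_mem' := by
    intro a b ha hb u hu
    simp [ha u hu, hb u hu]
  zero_mem' := by
    intro u hu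
    simp
  smul_mem' := by
    intro c a ha u hu
    simp [LinearMap.map_smulₛₗ, ha u hu]

/-- `ω` is positive definite on the subspace `W`. -/
def PosDefOn (ω : V →ₗ⋆[ℂ] V →ₗ[ℂ] ℂ) (W : Submodule ℂ V) : Prop :=
  ∀ x ∈ W, x ≠ 0 → 0 < (ω x x).re

/-- `ω` is negative definite on the subspace `W`. -/
def NegDefOn (ω : V →ₗ⋆[ℂ] V →ₗ[ℂ] ℂ) (W : Submodule ℂ V) : Prop :=
  ∀ x ∈ W, x ≠ 0 → (ω x x).re < 0

/-- `ω` restricted to `U` has signature `(a, b, c)`: `a` (resp. `b`) is the maximal dimension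
of a positive (resp. negative) definite subspace of `U` and `c` is the dimension of the
radical of `ω|_U`. -/
def HasSignature (ω : V →ₗ⋆[ℂ] V →ₗ[ℂ] ℂ) (U : Submodule ℂ V) (a b c : ℕ) : Prop :=
  IsGreatest {d | ∃ W : Submodule ℂ V, W ≤ U ∧ PosDefOn ω W ∧ finrank ℂ W = d} a ∧
  IsGreatest {d | ∃ W : Submodule ℂ V, W ≤ U ∧ NegDefOn ω W ∧ finrank ℂ W = d} b ∧
  finrank ℂ (U ⊓ perp ω U : Submodule ℂ V) = c


/-- An injective endomorphism preserving `ω` is a bijection. -/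
lemma exists_equiv_of_isometry [FiniteDimensional ℂ V] {ω : V →ₗ⋆[ℂ] V →ₗ[ℂ] ℂ}
    (hnd : IsNondeg ω) (f : V →ₗ[ℂ] V) (hf : ∀ x y, ω (f x) (f y) = ω x y) :
    ∃ φ : V ≃ₗ[ℂ] V, ∀ x, φ x = f x := by
  have hinj : Function.Injective f := by
    rw [← LinearMap.ker_eq_bot, LinearMap.ker_eq_bot']
    intro x hx
    refine hnd x fun y => ?_
    rw [← hf, hx, map_zero, LinearMap.zero_apply]
  exact ⟨LinearEquiv.ofInjectiveEndo f hinj, fun x => rfl⟩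

/-- If `ω x x = ω y y` and `ω (y - x) x ≠ 0`, a quasi-reflection along `y - x` maps `x` to `y`. -/
lemma exists_isometry_of_apply_sub_ne_zero [FiniteDimensional ℂ V]
    {ω : V →ₗ⋆[ℂ] V →ₗ[ℂ] ℂ} (hherm : IsHermitianForm ω) (hnd : IsNondeg ω) {x y : V}
    (hxy : ω x x = ω y y) (h0 : ω (y - x) x ≠ 0) :
    ∃ φ : V ≃ₗ[ℂ] V, (∀ v w, ω (φ v) (φ w) = ω v w) ∧ φ x = y ∧
      ∀ h, ω (y - x) h = 0 → φ h = h := by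
  obtain ⟨z, hz⟩ : ∃ z, z = y - x := ⟨_, rfl⟩
  obtain ⟨d, hd⟩ : ∃ d, d = ω z x := ⟨_, rfl⟩
  rw [← hz, ← hd] at h0
  have hd0 : star d ≠ 0 := star_ne_zero.mpr h0
  have key : d + star d + ω z z = 0 := by
    have h1 : star d = ω x z := by rw [hd, hherm x z]
    rw [h1, hd, hz]
    simp only [map_sub, LinearMap.sub_apply, hxy]
    ring
  let f : V →ₗ[ℂ] V := LinearMap.id + (d⁻¹ • ω z).smulRight z
  have hfv : ∀ v, f v = v + (d⁻¹ * ω z v) • z := fun v => by simp [f]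
  have hf : ∀ v w, ω (f v) (f w) = ω v w := by
    intro v w
    have hvz : ω v z = star (ω z v) := hherm v z
    have hzz : ω z z = -(d + star d) := by linear_combination key
    simp only [hfv, map_add, LinearMap.add_apply, map_smul, LinearMap.map_smulₛₗ,
      LinearMap.smul_apply, smul_eq_mul, map_mul, map_inv₀, hvz, hzz, starRingEnd_apply]
    field_simp
    ring
  obtain ⟨φ, hφ⟩ := exists_equiv_of_isometry hnd f hf
  refine ⟨φ, fun v w => by rw [hφ, hφ, hf], ?_, fun h hh => ?_⟩
  · rw [hφ, hfv, ← hd, inv_mul_cancel₀ h0, one_smul, hz, add_sub_cancel]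
  · rw [hφ, hfv, hz, hh, mul_zero, zero_smul, add_zero]

/-- A vector outside a subspace is separated from it by `ω`. -/
lemma exists_perp_apply_ne_zero {ω : V →ₗ⋆[ℂ] V →ₗ[ℂ] ℂ} (hherm : IsHermitianForm ω)
    (hnd : IsNondeg ω) {ι : Type*} [Finite ι] (h : ι → V) {x : V}
    (hx : x ∉ span ℂ (Set.range h)) :
    ∃ u, (∀ i, ω u (h i) = 0) ∧ ω u x ≠ 0 := by
  have := Fintype.ofFinite ι
  by_contra! hcon
  have hmem : ω x ∈ span ℂ (Set.range fun i => ω (h i)) := by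
    refine mem_span_of_iInf_ker_le_ker fun u hu => ?_
    simp only [Submodule.mem_iInf, LinearMap.mem_ker] at hu ⊢
    rw [hherm, hcon u fun i => by rw [hherm, hu i, star_zero], star_zero]
  obtain ⟨c, hc⟩ := (Submodule.mem_span_range_iff_exists_fun ℂ).mp hmem
  refine hx ((Submodule.mem_span_range_iff_exists_fun ℂ).mpr ⟨fun i => star (c i), ?_⟩)
  refine sub_eq_zero.mp (hnd _ fun y => ?_)
  rw [map_sub, ← hc]
  simp [LinearMap.map_smulₛₗ]

/-- Vectors `x` and `y` with the same pairings against a family `h`, and of the same length, are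
related by an isometry fixing `h`, provided that neither is in the span of `h`. -/
lemma exists_isometry_fixing [FiniteDimensional ℂ V] {ω : V →ₗ⋆[ℂ] V →ₗ[ℂ] ℂ}
    (hherm : IsHermitianForm ω) (hnd : IsNondeg ω) {ι : Type*} [Finite ι] (h : ι → V) {x y : V}
    (hx : x ∉ span ℂ (Set.range h)) (hy : y ∉ span ℂ (Set.range h))
    (hxy : ω x x = ω y y) (hh : ∀ i, ω x (h i) = ω y (h i)) :
    ∃ φ : V ≃ₗ[ℂ] V, (∀ v w, ω (φ v) (φ w) = ω v w) ∧ φ x = y ∧ ∀ i, φ (h i) = h i := by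
  by_cases h0 : ω (y - x) x = 0
  swap
  · obtain ⟨φ, h1, h2, h3⟩ := exists_isometry_of_apply_sub_ne_zero hherm hnd hxy h0
    exact ⟨φ, h1, h2, fun i => h3 _ (by simp [hh i])⟩
  have hyx : ω y x = ω x x := by simpa [sub_eq_zero] using h0
  have hxy' : ω x y = ω x x := by rw [hherm, hyx, ← hherm]
  obtain ⟨u, hu, hux, huy⟩ : ∃ u, (∀ i, ω u (h i) = 0) ∧ ω u x ≠ 0 ∧ ω u y ≠ 0 := by
    obtain ⟨u, hu, hux⟩ := exists_perp_apply_ne_zero hherm hnd h hx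
    obtain ⟨v, hv, hvy⟩ := exists_perp_apply_ne_zero hherm hnd h hy
    by_cases huy : ω u y = 0
    · by_cases hvx : ω v x = 0
      · exact ⟨u + v, fun i => by simp [hu, hv], by simpa [hvx], by simpa [huy]⟩
      · exact ⟨v, hv, hvx, hvy⟩
    · exact ⟨u, hu, hux, huy⟩
  have hq : star (ω u u) = ω u u := (hherm u u).symm
  obtain ⟨q, hqdef⟩ : ∃ q, q = ω u u := ⟨_, rfl⟩
  rw [← hqdef] at hq
  obtain ⟨d, hd⟩ : ∃ d, d = -q / 2 + Complex.I := ⟨_, rfl⟩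
  have hsum : d + star d + q = 0 := by
    have : star d = -q / 2 - Complex.I := by
      simp only [hd, star_add, star_div₀, star_neg, hq]
      simp [sub_eq_add_neg]
    rw [this, hd]
    ring
  have hd0 : d ≠ 0 := by
    intro hd0
    have hI : Complex.I = q / 2 := by linear_combination hd0 - hd
    have h2 : star Complex.I = Complex.I := by
      rw [hI, star_div₀, hq]
      simp
    have := congrArg Complex.im h2
    norm_num at this
  have hsd0 : star d ≠ 0 := star_ne_zero.mpr hd0
  have hsux0 : star (ω u x) ≠ 0 := star_ne_zero.mpr hux
  obtain ⟨s, hs⟩ : ∃ s, s = ω u x / d := ⟨_, rfl⟩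
  have hs0 : star s ≠ 0 := by rw [hs]; exact star_ne_zero.mpr (div_ne_zero hux hd0)
  obtain ⟨w, hw⟩ : ∃ w, w = x + s • u := ⟨_, rfl⟩
  have hxu : ω x u = star (ω u x) := hherm x u
  have hww : ω w w = ω x x := by
    simp only [hw, map_add, LinearMap.add_apply, map_smul, LinearMap.map_smulₛₗ,
      LinearMap.smul_apply, smul_eq_mul, hxu, starRingEnd_apply, hs, star_div₀, ← hqdef]
    field_simp
    linear_combination (ω u x) * star (ω u x) * hsum
  have hwh : ∀ i, ω w (h i) = ω x (h i) := fun i => by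
    simp [hw, LinearMap.map_smulₛₗ, hu]
  obtain ⟨φ, h1, h2, h3⟩ := exists_isometry_of_apply_sub_ne_zero hherm hnd (x := x) (y := w)
    hww.symm (by simpa [hw, LinearMap.map_smulₛₗ] using ⟨by simpa using hs0, hux⟩)
  obtain ⟨ψ, k1, k2, k3⟩ := exists_isometry_of_apply_sub_ne_zero hherm hnd (x := y) (y := w)
    (hxy.symm.trans hww.symm) (by
      simpa [hw, LinearMap.map_smulₛₗ, hxy', hxy] using ⟨by simpa using hs0, huy⟩)
  have hψ : ∀ v w, ω (ψ.symm v) (ψ.symm w) = ω v w := fun v w => by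
    rw [← k1, ψ.apply_symm_apply, ψ.apply_symm_apply]
  refine ⟨φ.trans ψ.symm, fun v w => by simp [hψ, h1], ?_, fun i => ?_⟩
  · simp [h2, LinearEquiv.symm_apply_eq, k2]
  · rw [LinearEquiv.trans_apply, h3 _ (by simp [hwh]), LinearEquiv.symm_apply_eq,
      k3 _ (by simp [hwh, hh])]

/-- **Witt's theorem**: linearly independent families with the same Gram matrix are related by an
isometry. -/
lemma exists_isometry_of_gram_eq [FiniteDimensional ℂ V] {ω : V →ₗ⋆[ℂ] V →ₗ[ℂ] ℂ}
    (hherm : IsHermitianForm ω) (hnd : IsNondeg ω) {m : ℕ} (x y : Fin m → V)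
    (hx : LinearIndependent ℂ x) (hy : LinearIndependent ℂ y)
    (hxy : ∀ i j, ω (x i) (x j) = ω (y i) (y j)) :
    ∃ φ : V ≃ₗ[ℂ] V, (∀ v w, ω (φ v) (φ w) = ω v w) ∧ ∀ i, φ (x i) = y i := by
  induction m with
  | zero => exact ⟨LinearEquiv.refl ℂ V, fun _ _ => rfl, fun i => i.elim0⟩
  | succ m ih =>
    obtain ⟨φ, hφ, hφx⟩ := ih (x ∘ Fin.succ) (y ∘ Fin.succ)
      (hx.comp _ (Fin.succ_injective m)) (hy.comp _ (Fin.succ_injective m))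
      fun i j => hxy _ _
    have hx0 : φ (x 0) ∉ span ℂ (Set.range (y ∘ Fin.succ)) := by
      have hx' := (linearIndependent_finSucc.mp
        (hx.map' (φ : V →ₗ[ℂ] V) (LinearMap.ker_eq_bot.mpr φ.injective))).2
      have : Fin.tail ((φ : V →ₗ[ℂ] V) ∘ x) = y ∘ Fin.succ := funext hφx
      rwa [this] at hx'
    obtain ⟨ψ, hψ, hψ0, hψy⟩ := exists_isometry_fixing hherm hnd (y ∘ Fin.succ) hx0
      (linearIndependent_finSucc.mp hy).2 (by rw [hφ, hxy])
      (fun i => by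
        rw [← hφx, hφ, hφx]
        exact hxy _ _)
    refine ⟨φ.trans ψ, fun v w => by simp [hψ, hφ], Fin.cases (by simp [hψ0]) fun i => ?_⟩
    have h1 := hφx i
    have h2 := hψy i
    simp only [Function.comp_apply] at h1 h2
    simp [h1, h2]

lemma apply_eq_zero_of_apply_self_eq_zero {ω : V →ₗ⋆[ℂ] V →ₗ[ℂ] ℂ} {U : Submodule ℂ V}
    (h : ∀ x ∈ U, ω x x = 0) {x y : V} (hx : x ∈ U) (hy : y ∈ U) : ω x y = 0 := by
  have h1 := h _ (U.add_mem hx hy)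
  have h2 := h _ (U.add_mem hx (U.smul_mem Complex.I hy))
  simp only [map_add, LinearMap.add_apply, map_smul, LinearMap.map_smulₛₗ, LinearMap.smul_apply,
    smul_eq_mul, h x hx, h y hy, Complex.conj_I] at h1 h2
  linear_combination (1 / 2) * h1 - (Complex.I / 2) * h2 +
    (ω x y - ω y x) / 2 * Complex.I_mul_I

/-- A vector of nonzero length can be rescaled to have length `±1`. -/
lemma exists_smul_apply_self_eq_sign {ω : V →ₗ⋆[ℂ] V →ₗ[ℂ] ℂ} (hherm : IsHermitianForm ω) {x : V}
    (hx : ω x x ≠ 0) :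
    ∃ (c : ℂ) (s : SignType), s ≠ 0 ∧ ω (c • x) (c • x) = (s : ℂ) := by
  obtain ⟨r, hr⟩ : ∃ r : ℝ, ω x x = r :=
    ⟨(ω x x).re, (Complex.conj_eq_iff_re.mp (hherm x x).symm).symm⟩
  have hr0 : r ≠ 0 := by rintro rfl; simp [hr] at hx
  have hsq : (√|r|) * √|r| = |r| := Real.mul_self_sqrt (abs_nonneg r)
  refine ⟨((√|r|)⁻¹ : ℝ), SignType.sign r, by simpa [sign_eq_zero_iff] using hr0, ?_⟩
  have h1 : (√|r|)⁻¹ * ((√|r|)⁻¹ * r) = (SignType.sign r : ℝ) := by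
    rw [← mul_assoc, ← mul_inv, hsq, inv_mul_eq_iff_eq_mul₀ (abs_ne_zero.mpr hr0), mul_comm,
      sign_mul_abs]
  have h2 : (((SignType.sign r : SignType) : ℝ) : ℂ) = ((SignType.sign r : SignType) : ℂ) := by
    cases SignType.sign r <;> simp
  simp only [map_smul, LinearMap.map_smulₛₗ, LinearMap.smul_apply, smul_eq_mul, hr,
    Complex.conj_ofReal]
  rw [← h2, ← h1]
  push_cast
  rfl

/-- **Sylvester**: every subspace has an orthogonal basis of vectors of length `1`, `-1` or `0`. -/
lemma exists_orthogonal_basis [FiniteDimensional ℂ V] {ω : V →ₗ⋆[ℂ] V →ₗ[ℂ] ℂ}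
    (hherm : IsHermitianForm ω) (U : Submodule ℂ V) :
    ∃ (m : ℕ) (e : Fin m → V) (ε : Fin m → SignType), LinearIndependent ℂ e ∧
      span ℂ (Set.range e) = U ∧ ∀ i j, ω (e i) (e j) = if i = j then (ε i : ℂ) else 0 := by
  induction U using WellFoundedLT.induction with
  | ind U ih =>
    by_cases hU : ∀ x ∈ U, ω x x = 0
    · let b := finBasis ℂ U
      refine ⟨_, fun i => (b i : V), fun _ => 0, ?_, ?_, fun i j => ?_⟩
      · exact b.linearIndependent.map' U.subtype U.ker_subtype
      · have := congrArg (Submodule.map U.subtype) b.span_eq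
        rw [Submodule.map_span, Submodule.map_top, Submodule.range_subtype, ← Set.range_comp]
          at this
        exact this
      · simp [apply_eq_zero_of_apply_self_eq_zero hU (b i).2 (b j).2]
    · push Not at hU
      obtain ⟨x₀, hx₀, hx₀'⟩ := hU
      obtain ⟨c, s, hs, hx⟩ := exists_smul_apply_self_eq_sign hherm hx₀'
      obtain ⟨x, hxdef⟩ : ∃ x, x = c • x₀ := ⟨_, rfl⟩
      rw [← hxdef] at hx
      have hxU : x ∈ U := hxdef ▸ U.smul_mem c hx₀
      have hs' : ω x x ≠ 0 := by rw [hx]; cases s <;> simp_all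
      have hlt : U ⊓ LinearMap.ker (ω x) < U :=
        lt_of_le_of_ne inf_le_left fun h => hs' (h.ge hxU).2
      obtain ⟨m, e, ε, he, hspan, hgram⟩ := ih _ hlt
      have hmem : ∀ i, e i ∈ U ⊓ LinearMap.ker (ω x) := fun i =>
        hspan ▸ subset_span (Set.mem_range_self i)
      have hxe : ∀ i, ω x (e i) = 0 := fun i => (hmem i).2
      have hex : ∀ i, ω (e i) x = 0 := fun i => by rw [hherm, hxe, star_zero]
      refine ⟨m + 1, Fin.cons x e, Fin.cons s ε, ?_, ?_, ?_⟩
      · refine linearIndependent_finCons.mpr ⟨he, fun hxs => hs' ?_⟩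
        rw [hspan] at hxs
        exact hxs.2
      · rw [Fin.range_cons, span_insert, hspan]
        refine le_antisymm (sup_le ((span_singleton_le_iff_mem _ _).mpr hxU) inf_le_left) ?_
        intro v hv
        rw [mem_sup]
        refine ⟨(ω x v / ω x x) • x, mem_span_singleton.mpr ⟨_, rfl⟩, v - (ω x v / ω x x) • x,
          ⟨U.sub_mem hv (U.smul_mem _ hxU), ?_⟩, by abel⟩
        simp [hs']
      · refine Fin.cases (Fin.cases ?_ fun j => ?_) fun i => Fin.cases ?_ fun j => ?_
        · simp [hx]
        · simp [hxe, (Fin.succ_ne_zero j).symm]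
        · simp [hex]
        · simp [hgram]

lemma apply_sum_self {ω : V →ₗ⋆[ℂ] V →ₗ[ℂ] ℂ} {ι : Type*} [Fintype ι] {f : ι → V}
    (hf : ∀ i j, i ≠ j → ω (f i) (f j) = 0) (c : ι → ℂ) :
    (ω (∑ i, c i • f i) (∑ i, c i • f i)).re
      = ∑ i, Complex.normSq (c i) * (ω (f i) (f i)).re := by
  have : ω (∑ i, c i • f i) (∑ i, c i • f i)
      = ∑ i, (Complex.normSq (c i) : ℂ) * ω (f i) (f i) := by
    simp only [map_sum, LinearMap.sum_apply, LinearMap.map_smulₛₗ, LinearMap.smul_apply, map_smul,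
      smul_eq_mul]
    refine Finset.sum_congr rfl fun i _ => ?_
    rw [Finset.sum_eq_single i]
    · rw [Complex.normSq_eq_conj_mul_self]
      ring
    · intro j _ hji
      simp [hf j i hji]
    · simp
  rw [this, Complex.re_sum]
  simp only [Complex.re_ofReal_mul]

/-- **Law of inertia**: the maximal dimension of a positive definite subspace of the span of an
orthogonal family is the number of vectors of positive length. -/
lemma isGreatest_card_pos [FiniteDimensional ℂ V] {ω : V →ₗ⋆[ℂ] V →ₗ[ℂ] ℂ} {ι : Type*} [Fintype ι]
    {e : ι → V} (he : LinearIndependent ℂ e) (horth : ∀ i j, i ≠ j → ω (e i) (e j) = 0)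
    (P : ι → Prop) [DecidablePred P] (hP : ∀ i, P i ↔ 0 < (ω (e i) (e i)).re) :
    IsGreatest {d | ∃ W : Submodule ℂ V, W ≤ span ℂ (Set.range e) ∧ PosDefOn ω W ∧
      finrank ℂ W = d} (Fintype.card {i // P i}) := by
  have hsub : ∀ Q : ι → Prop, ∀ i j : {i // Q i}, i ≠ j → ω (e i) (e j) = 0 := fun Q i j hij =>
    horth _ _ (Subtype.coe_ne_coe.mpr hij)
  have hle : ∀ Q : ι → Prop, span ℂ (Set.range fun i : {i // Q i} => e i)
      ≤ span ℂ (Set.range e) := fun Q =>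
    span_mono (Set.range_comp_subset_range Subtype.val e)
  constructor
  · refine ⟨span ℂ (Set.range fun i : {i // P i} => e i), hle P, ?_,
      finrank_span_eq_card (he.comp _ Subtype.val_injective)⟩
    intro x hx hx0
    obtain ⟨c, rfl⟩ := (Submodule.mem_span_range_iff_exists_fun ℂ).mp hx
    rw [apply_sum_self (hsub P)]
    obtain ⟨i, hi⟩ : ∃ i, c i ≠ 0 := by
      by_contra! hc
      simp [hc] at hx0
    exact Finset.sum_pos'
      (fun j _ => mul_nonneg (Complex.normSq_nonneg _) ((hP j).mp j.2).le)
      ⟨i, Finset.mem_univ i, mul_pos (Complex.normSq_pos.mpr hi) ((hP i).mp i.2)⟩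
  · rintro d ⟨W, hWU, hW, rfl⟩
    let N := span ℂ (Set.range fun i : {i // ¬ P i} => e i)
    have hN : finrank ℂ N = Fintype.card {i // ¬ P i} :=
      finrank_span_eq_card (he.comp _ Subtype.val_injective)
    have hdisj : W ⊓ N = ⊥ := by
      rw [eq_bot_iff]
      rintro x ⟨hxW, hxN⟩
      by_contra hx0
      have hpos := hW x hxW hx0
      obtain ⟨c, rfl⟩ := (Submodule.mem_span_range_iff_exists_fun ℂ).mp hxN
      rw [apply_sum_self (hsub _)] at hpos
      refine hpos.not_ge (Finset.sum_nonpos fun j _ =>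
        mul_nonpos_of_nonneg_of_nonpos (Complex.normSq_nonneg _) ?_)
      exact not_lt.mp fun h => j.2 ((hP j).mpr h)
    have h1 := Submodule.finrank_sup_add_finrank_inf_eq W N
    have h2 := Submodule.finrank_mono (sup_le hWU (hle fun i => ¬ P i))
    rw [finrank_span_eq_card he] at h2
    rw [hdisj, finrank_bot, hN] at h1
    have h3 := Fintype.card_subtype_compl P
    have h4 := Fintype.card_subtype_le P
    have h2' : finrank ℂ (W ⊔ N : Submodule ℂ V) ≤ Fintype.card ι := h2
    omega

lemma negDefOn_iff_posDefOn_neg {ω : V →ₗ⋆[ℂ] V →ₗ[ℂ] ℂ} {W : Submodule ℂ V} :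
    NegDefOn ω W ↔ PosDefOn (-ω) W := by
  simp [NegDefOn, PosDefOn]

lemma HasSignature.card_eq [FiniteDimensional ℂ V] {ω : V →ₗ⋆[ℂ] V →ₗ[ℂ] ℂ} {a b c m : ℕ}
    {e : Fin m → V} {ε : Fin m → SignType} (he : LinearIndependent ℂ e)
    (hgram : ∀ i j, ω (e i) (e j) = if i = j then (ε i : ℂ) else 0)
    (h : HasSignature ω (span ℂ (Set.range e)) a b c) :
    Fintype.card {i // ε i = 1} = a ∧ Fintype.card {i // ε i = -1} = b := by
  refine ⟨(isGreatest_card_pos he (fun i j hij => by simp [hgram, hij]) _ fun i => ?_).unique h.1,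
    (isGreatest_card_pos (ω := -ω) he (fun i j hij => by simp [hgram, hij]) _
      fun i => ?_).unique (by simpa only [negDefOn_iff_posDefOn_neg] using h.2.1)⟩
  · cases hi : ε i <;> simp [hgram, hi]
  · cases hi : ε i <;> simp [hgram, hi]

lemma exists_equiv_of_card_sign_eq {m : ℕ} (f g : Fin m → SignType)
    (hpos : Fintype.card {i // f i = 1} = Fintype.card {i // g i = 1})
    (hneg : Fintype.card {i // f i = -1} = Fintype.card {i // g i = -1}) :
    ∃ σ : Fin m ≃ Fin m, ∀ i, g (σ i) = f i := by
  have hsum : ∀ f : Fin m → SignType, m = Fintype.card {i // f i = 0} +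
      Fintype.card {i // f i = -1} + Fintype.card {i // f i = 1} := fun f => by
    have := Fintype.card_congr (Equiv.sigmaFiberEquiv f)
    rw [Fintype.card_sigma, Fintype.card_fin, SignType.univ_eq, Finset.sum_insert (by decide),
      Finset.sum_insert (by decide), Finset.sum_singleton, ← add_assoc] at this
    exact this.symm
  have hcard : ∀ s, Fintype.card {i // f i = s} = Fintype.card {i // g i = s} := by
    have hf := hsum f
    have hg := hsum g
    rintro (_ | _ | _)
    · change Fintype.card {i // f i = 0} = Fintype.card {i // g i = 0}
      omega
    · exact hneg
    · exact hpos
  let σ := fun s => Fintype.equivOfCardEq (hcard s)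
  refine ⟨(Equiv.sigmaFiberEquiv f).symm.trans
    ((Equiv.sigmaCongrRight σ).trans (Equiv.sigmaFiberEquiv g)), fun i => ?_⟩
  exact (σ (f i) ⟨i, rfl⟩).2

lemma exists_hasSignature [FiniteDimensional ℂ V] (ω : V →ₗ⋆[ℂ] V →ₗ[ℂ] ℂ) (U : Submodule ℂ V) :
    ∃ a b c, HasSignature ω U a b c := by
  have key : ∀ Q : Submodule ℂ V → Prop, Q ⊥ →
      ∃ a, IsGreatest {d | ∃ W : Submodule ℂ V, W ≤ U ∧ Q W ∧ finrank ℂ W = d} a := by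
    intro Q hQ
    have hbdd : BddAbove {d | ∃ W : Submodule ℂ V, W ≤ U ∧ Q W ∧ finrank ℂ W = d} := by
      refine ⟨finrank ℂ U, ?_⟩
      rintro d ⟨W, hW, -, rfl⟩
      exact Submodule.finrank_mono hW
    exact ⟨_, Nat.sSup_mem ⟨_, ⊥, bot_le, hQ, rfl⟩ hbdd, fun d hd => le_csSup hbdd hd⟩
  obtain ⟨a, ha⟩ := key (PosDefOn ω) fun x hx hx0 => absurd ((mem_bot ℂ).mp hx) hx0
  obtain ⟨b, hb⟩ := key (NegDefOn ω) fun x hx hx0 => absurd ((mem_bot ℂ).mp hx) hx0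
  exact ⟨a, b, _, ha, hb, rfl⟩

lemma HasSignature.map_isometry {ω : V →ₗ⋆[ℂ] V →ₗ[ℂ] ℂ}
    {U : Submodule ℂ V} {a b c : ℕ} (h : HasSignature ω U a b c) (φ : V ≃ₗ[ℂ] V)
    (hφ : ∀ x y, ω (φ x) (φ y) = ω x y) :
    HasSignature ω (U.map (φ : V →ₗ[ℂ] V)) a b c := by
  have key : ∀ R : ℝ → Prop,
      {d | ∃ W : Submodule ℂ V, W ≤ U.map (φ : V →ₗ[ℂ] V) ∧
        (∀ x ∈ W, x ≠ 0 → R (ω x x).re) ∧ finrank ℂ W = d} =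
      {d | ∃ W : Submodule ℂ V, W ≤ U ∧ (∀ x ∈ W, x ≠ 0 → R (ω x x).re) ∧
        finrank ℂ W = d} := by
    intro R
    ext d
    constructor
    · rintro ⟨W, hWU, hW, rfl⟩
      refine ⟨W.map (φ.symm : V →ₗ[ℂ] V), ?_, ?_, LinearEquiv.finrank_map_eq φ.symm W⟩
      · rintro _ ⟨w, hw, rfl⟩
        obtain ⟨u, hu, rfl⟩ := hWU hw
        simpa using hu
      · rintro _ ⟨w, hw, rfl⟩ hw0
        rw [← hφ]
        simpa using hW w hw (by simpa using hw0)
    · rintro ⟨W, hWU, hW, rfl⟩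
      refine ⟨W.map (φ : V →ₗ[ℂ] V), Submodule.map_mono hWU, ?_, LinearEquiv.finrank_map_eq φ W⟩
      rintro _ ⟨w, hw, rfl⟩ hw0
      simpa [hφ] using hW w hw (by simpa using hw0)
  have hperp : U.map (φ : V →ₗ[ℂ] V) ⊓ perp ω (U.map (φ : V →ₗ[ℂ] V)) =
      (U ⊓ perp ω U).map (φ : V →ₗ[ℂ] V) := by
    ext v
    constructor
    · rintro ⟨⟨u, hu, rfl⟩, hv⟩
      exact ⟨u, ⟨hu, fun w hw => (hφ u w).symm.trans (hv _ ⟨w, hw, rfl⟩)⟩, rfl⟩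
    · rintro ⟨u, ⟨hu, hv⟩, rfl⟩
      refine ⟨⟨u, hu, rfl⟩, ?_⟩
      rintro _ ⟨w, hw, rfl⟩
      exact (hφ u w).trans (hv w hw)
  refine ⟨?_, ?_, ?_⟩
  · exact (key fun r => 0 < r).symm ▸ h.1
  · exact (key fun r => r < 0).symm ▸ h.2.1
  · rw [hperp, LinearEquiv.finrank_map_eq, h.2.2]

theorem same_unitary_orbit_iff_same_signature
    [FiniteDimensional ℂ V] (n p k : ℕ) (hn : finrank ℂ V = n) (hpn : p ≤ n) (hk : k ≤ n)
    (ω : V →ₗ⋆[ℂ] V →ₗ[ℂ] ℂ) (hherm : IsHermitianForm ω) (hnd : IsNondeg ω)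
    (hsig : HasSignature ω ⊤ p (n - p) 0)
    (U₁ U₂ : Submodule ℂ V) (hU₁ : finrank ℂ U₁ = k) (hU₂ : finrank ℂ U₂ = k) :
    (∃ φ : V ≃ₗ[ℂ] V, (∀ x y, ω (φ x) (φ y) = ω x y) ∧
        Submodule.map (φ : V →ₗ[ℂ] V) U₁ = U₂) ↔
      ∃ a b c, HasSignature ω U₁ a b c ∧ HasSignature ω U₂ a b c := by
  constructor
  · rintro ⟨φ, hφ, rfl⟩
    obtain ⟨a, b, c, h⟩ := exists_hasSignature ω U₁
    exact ⟨a, b, c, h, h.map_isometry φ hφ⟩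
  · rintro ⟨a, b, c, h₁, h₂⟩
    obtain ⟨m₁, e₁, ε₁, he₁, rfl, hg₁⟩ := exists_orthogonal_basis hherm U₁
    obtain ⟨m₂, e₂, ε₂, he₂, rfl, hg₂⟩ := exists_orthogonal_basis hherm U₂
    rw [finrank_span_eq_card he₁, Fintype.card_fin] at hU₁
    rw [finrank_span_eq_card he₂, Fintype.card_fin] at hU₂
    subst hU₁ hU₂
    obtain ⟨ha₁, hb₁⟩ := h₁.card_eq he₁ hg₁
    obtain ⟨ha₂, hb₂⟩ := h₂.card_eq he₂ hg₂
    obtain ⟨σ, hσ⟩ := exists_equiv_of_card_sign_eq ε₁ ε₂ (ha₁.trans ha₂.symm)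
      (hb₁.trans hb₂.symm)
    obtain ⟨φ, hφ, hφe⟩ := exists_isometry_of_gram_eq hherm hnd e₁ (e₂ ∘ σ) he₁
      (he₂.comp _ σ.injective) fun i j => by simp [hg₁, hg₂, hσ]
    refine ⟨φ, hφ, ?_⟩
    rw [Submodule.map_span, ← Set.range_comp, ← σ.surjective.range_comp e₂]
    exact congrArg (fun f => span ℂ (Set.range f)) (funext hφe)
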